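/- Let Δ be a root basis in a non-degenerate quadratic space (V,B). For every x ∈ C*, every w ∈ W and every α ∈ Δ, either B(w(x), α) ≥ 0 and ℓ(s_α·w) > ℓ(w), or B(w(x), α) ≤ 0 and ℓ(s_α·w) < ℓ(w). -/

import Mathlib

open scoped BigOperators

namespace BoydMaxwell

variable {V : Type*} [AddCommGroup V] [Module ℝ V]

/-- `(V, B)` is a Lorentz space: `B` is non-degenerate with exactly one negative
eigenvalue, i.e. there is a time-like vector but every subspace on which `B` is
negative definite has dimension at most `1`. -/
def IsLorentz (B : LinearMap.BilinForm ℝ V) : Prop :=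
  B.Nondegenerate ∧ (∃ v : V, B v v < 0) ∧
    ∀ W : Submodule ℝ V, (∀ v ∈ W, v ≠ 0 → B v v < 0) → Module.finrank ℝ W ≤ 1

/-- A root basis in the quadratic space `(V, B)`. -/
structure IsRootBasis (B : LinearMap.BilinForm ℝ V) (Δ : Finset V) : Prop where
  unit : ∀ α ∈ Δ, B α α = 1
  offdiag : ∀ α ∈ Δ, ∀ β ∈ Δ, α ≠ β →
    B α β ≤ -1 ∨ ∃ k : ℕ, 2 ≤ k ∧ B α β = -Real.cos (Real.pi / k)
  posIndep : ∀ c : V → ℝ, (∀ α ∈ Δ, 0 ≤ c α) →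
    (∑ α ∈ Δ, c α • α) = 0 → ∀ α ∈ Δ, c α = 0
  spans : Submodule.span ℝ (Δ : Set V) = ⊤

/-- The reflection `s_α : x ↦ x - 2 B(α,x) α`. -/
def reflection (B : LinearMap.BilinForm ℝ V) (α : V) : V →ₗ[ℝ] V :=
  LinearMap.id - (B α).smulRight ((2 : ℝ) • α)

/-- The Weyl group `W`: the subgroup of linear automorphisms generated by the
reflections in the simple roots. -/
def weylGroup (B : LinearMap.BilinForm ℝ V) (Δ : Finset V) : Subgroup (V ≃ₗ[ℝ] V) :=
  Subgroup.closure { g : V ≃ₗ[ℝ] V | ∃ α ∈ Δ, (g : V →ₗ[ℝ] V) = reflection B α }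

/-- The set of roots `Φ = W(Δ)`. -/
def roots (B : LinearMap.BilinForm ℝ V) (Δ : Finset V) : Set V :=
  { x | ∃ w ∈ weylGroup B Δ, ∃ α ∈ Δ, x = w α }

/-- The polyhedral cone of non-negative linear combinations of a finite set. -/
def cone (Δ : Finset V) : Set V :=
  { x | ∃ c : V → ℝ, (∀ α ∈ Δ, 0 ≤ c α) ∧ x = ∑ α ∈ Δ, c α • α }

/-- `F` is a face of the convex set `C`. -/
def IsFace (C F : Set V) : Prop :=
  F ⊆ C ∧ Convex ℝ F ∧ ∀ x ∈ C, ∀ y ∈ C, ∀ t : ℝ, 0 < t → t < 1 →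
    t • x + (1 - t) • y ∈ F → x ∈ F ∧ y ∈ F

/-- `I ⊆ Δ` is an `l`-facial subset: `Cone(I)` is a face of `Cone(Δ)` and
`Span(I)` has codimension `l` in `V`. -/
def IsFacial (Δ I : Finset V) (l : ℕ) : Prop :=
  I ⊆ Δ ∧ IsFace (cone Δ) (cone I) ∧
    Module.finrank ℝ (Submodule.span ℝ (I : Set V)) + l = Module.finrank ℝ V

/-- `B` is positive semidefinite on the span of every `l`-facial subset. -/
def LevelLE (B : LinearMap.BilinForm ℝ V) (Δ : Finset V) (l : ℕ) : Prop :=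
  ∀ I : Finset V, IsFacial Δ I l → ∀ x ∈ Submodule.span ℝ (I : Set V), 0 ≤ B x x

/-- The root system generated by `Δ` has level exactly `l`: `l` is the smallest
integer such that `B` is positive semidefinite on the span of every `l`-facial
subset of `Δ`. -/
def HasLevel (B : LinearMap.BilinForm ℝ V) (Δ : Finset V) (l : ℕ) : Prop :=
  LevelLE B Δ l ∧ ∀ m : ℕ, m < l → ¬ LevelLE B Δ m

/-- `ω` is the weight associated to the `1`-facial subset `I`. -/
def IsWeight (B : LinearMap.BilinForm ℝ V) (Δ I : Finset V) (ω : V) : Prop :=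
  IsFacial Δ I 1 ∧ (∀ α ∈ I, B α ω = 0) ∧
    (∀ α ∈ Δ, α ∉ I → 0 < B α ω) ∧
    (∀ α ∈ Δ, α ∉ I → 1 ≤ B α ω) ∧ (∃ α ∈ Δ, α ∉ I ∧ B α ω = 1)

/-- The set `Δ*` of weights. -/
def weights (B : LinearMap.BilinForm ℝ V) (Δ : Finset V) : Set V :=
  { ω | ∃ I : Finset V, IsWeight B Δ I ω }

/-- The orbit `Ω = W(Δ*)`. -/
def Omega (B : LinearMap.BilinForm ℝ V) (Δ : Finset V) : Set V :=
  { x | ∃ w ∈ weylGroup B Δ, ∃ ω ∈ weights B Δ, x = w ω }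

/-- Two vectors are disjoint: `B(x,y) ≤ 0` and `B` is not positive definite on
`Span{x,y}`. -/
def DisjointVec (B : LinearMap.BilinForm ℝ V) (x y : V) : Prop :=
  B x y ≤ 0 ∧ ¬ ∀ z ∈ Submodule.span ℝ ({x, y} : Set V), z ≠ 0 → 0 < B z z

/-- The fundamental chamber `C* = {x | B(x, α) ≥ 0 for all α ∈ Δ}`. -/
def chamber (B : LinearMap.BilinForm ℝ V) (Δ : Finset V) : Set V :=
  { x | ∀ α ∈ Δ, 0 ≤ B x α }

/-- The Tits cone `T = ⋃_{w ∈ W} w(C*)`. -/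
def titsCone (B : LinearMap.BilinForm ℝ V) (Δ : Finset V) : Set V :=
  { x | ∃ w ∈ weylGroup B Δ, ∃ y ∈ chamber B Δ, x = w y }

/-- The convex cone generated by an arbitrary set. -/
def coneOf (X : Set V) : Set V :=
  { x | ∃ (s : Finset V) (c : V → ℝ), (↑s ⊆ X) ∧ (∀ v ∈ s, 0 ≤ c v) ∧
      x = ∑ v ∈ s, c v • v }


/-- The word length of a group element with respect to a set of generators. -/
noncomputable def wordLength {G : Type*} [Group G] (S : Set G) (w : G) : ℕ :=
  sInf { n | ∃ l : List G, (∀ g ∈ l, g ∈ S) ∧ l.length = n ∧ l.prod = w }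

/-- The set of simple reflections of a root basis, as linear automorphisms. -/
def simpleReflections {V : Type*} [AddCommGroup V] [Module ℝ V]
    (B : LinearMap.BilinForm ℝ V) (Δ : Finset V) : Set (V ≃ₗ[ℝ] V) :=
  { g | ∃ α ∈ Δ, (g : V →ₗ[ℝ] V) = reflection B α }

/-!
Since `B(w x, α) = B(x, w⁻¹ α)`, it suffices to show that `ℓ(w) ≤ ℓ(s_α w)` forces `w⁻¹ α` into the
cone generated by `Δ`; the other case follows by applying this to `s_α w`, and `ℓ(s_α w) ≠ ℓ(w)`
because reflections have determinant `-1`. Choose `β ∈ Δ` with `ℓ(s_β w) < ℓ(w)` and factor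
`w = u v` with `u` in the group generated by `s_α`, `s_β`, lengths adding, and `v` of minimal length
in its coset. By induction on the length `v⁻¹ α` and `v⁻¹ β` lie in the cone, so it remains to see
that `u⁻¹ α` is a non-negative combination of `α` and `β`. Its coefficients are the values of two
consecutive Chebyshev polynomials of the second kind at `-B(α, β)`. They are non-negative when
`-B(α, β) ≥ 1`, and for `-B(α, β) = cos (π / k)` as long as `ℓ(u) < k`. This bound holds because
at length `k - 1` the vector `u⁻¹ α` is `α` or `β`, which yields a braid relation.
-/

section WordLength

variable {G : Type*} [Group G] {S I : Set G} {u v w g h : G}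

theorem mul_mul_cancel_of_inv_eq_self (hg : g⁻¹ = g) : g * (g * w) = w := by
  simpa only [hg] using inv_mul_cancel_left g w

theorem wordLength_prod_le_length {l : List G} (hl : ∀ g ∈ l, g ∈ S) :
    wordLength S l.prod ≤ l.length :=
  Nat.sInf_le ⟨l, hl, rfl, rfl⟩

theorem exists_list_length_eq_wordLength (hS : ∀ g ∈ S, g⁻¹ ∈ S)
    (hw : w ∈ Subgroup.closure S) :
    ∃ l : List G, (∀ g ∈ l, g ∈ S) ∧ l.length = wordLength S w ∧ l.prod = w := by
  have hunion : S ∪ S⁻¹ = S := Set.union_eq_left.2 fun g hg => inv_inv g ▸ hS _ hg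
  rw [← Subgroup.mem_toSubmonoid, Subgroup.closure_toSubmonoid, hunion] at hw
  obtain ⟨l, hl, hprod⟩ := Submonoid.exists_list_of_mem_closure hw
  exact Nat.sInf_mem
    (s := {n | ∃ l : List G, (∀ g ∈ l, g ∈ S) ∧ l.length = n ∧ l.prod = w})
    ⟨l.length, l, hl, rfl, hprod⟩

theorem wordLength_one : wordLength S 1 = 0 :=
  Nat.le_zero.1 (wordLength_prod_le_length (l := []) (by simp))

theorem wordLength_le_one (hg : g ∈ S) : wordLength S g ≤ 1 := by
  simpa using wordLength_prod_le_length (l := [g]) (by simpa using hg)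

theorem wordLength_mul_le (hIS : I ⊆ S) (hI : ∀ g ∈ I, g⁻¹ ∈ I) (hS : ∀ g ∈ S, g⁻¹ ∈ S)
    (hu : u ∈ Subgroup.closure I) (hv : v ∈ Subgroup.closure S) :
    wordLength S (u * v) ≤ wordLength I u + wordLength S v := by
  obtain ⟨lu, hlu, hlen_u, rfl⟩ := exists_list_length_eq_wordLength hI hu
  obtain ⟨lv, hlv, hlen_v, rfl⟩ := exists_list_length_eq_wordLength hS hv
  have hmem : ∀ g ∈ lu ++ lv, g ∈ S := fun g hg =>
    (List.mem_append.1 hg).elim (fun h => hIS (hlu g h)) (hlv g)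
  simpa [hlen_u, hlen_v] using wordLength_prod_le_length hmem

theorem exists_eq_mul_of_wordLength_ne_zero (hS : ∀ g ∈ S, g⁻¹ ∈ S)
    (hw : w ∈ Subgroup.closure S) (hne : wordLength S w ≠ 0) :
    ∃ g ∈ S, ∃ v ∈ Subgroup.closure S, w = g * v ∧ wordLength S w = wordLength S v + 1 := by
  obtain ⟨_ | ⟨g, l⟩, hl, hlen, rfl⟩ := exists_list_length_eq_wordLength hS hw
  · exact absurd hlen.symm hne
  rw [List.forall_mem_cons] at hl
  have hv : l.prod ∈ Subgroup.closure S :=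
    list_prod_mem fun s hs => Subgroup.subset_closure (hl.2 s hs)
  refine ⟨g, hl.1, l.prod, hv, List.prod_cons, le_antisymm ?_ ?_⟩
  · have := wordLength_mul_le subset_rfl hS hS (Subgroup.subset_closure hl.1) hv
    have := wordLength_le_one hl.1
    rw [List.prod_cons]
    omega
  · have := wordLength_prod_le_length hl.2
    rw [List.length_cons] at hlen
    omega

theorem exists_wordLength_mul_lt (hS : ∀ g ∈ S, g⁻¹ ∈ S)
    (hw : w ∈ Subgroup.closure S) (hne : wordLength S w ≠ 0) :
    ∃ g ∈ S, wordLength S (g * w) < wordLength S w := by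
  obtain ⟨g, hg, v, -, rfl, hlen⟩ := exists_eq_mul_of_wordLength_ne_zero hS hw hne
  exact ⟨g⁻¹, hS g hg, by rw [inv_mul_cancel_left]; omega⟩

theorem eq_one_of_wordLength_eq_zero (hS : ∀ g ∈ S, g⁻¹ ∈ S)
    (hw : w ∈ Subgroup.closure S) (hzero : wordLength S w = 0) : w = 1 := by
  obtain ⟨l, -, hlen, rfl⟩ := exists_list_length_eq_wordLength hS hw
  rw [List.eq_nil_of_length_eq_zero (hlen.trans hzero), List.prod_nil]

theorem exists_mul_eq_of_subset (hIS : I ⊆ S) (hI : ∀ g ∈ I, g⁻¹ ∈ I)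
    (hS : ∀ g ∈ S, g⁻¹ ∈ S) (hw : w ∈ Subgroup.closure S) :
    ∃ u ∈ Subgroup.closure I, ∃ v ∈ Subgroup.closure S, u * v = w ∧
      wordLength S w = wordLength I u + wordLength S v ∧
      ∀ s ∈ I, wordLength S v ≤ wordLength S (s * v) := by
  induction hn : wordLength S w using Nat.strong_induction_on generalizing w with
  | _ n ih =>
  subst hn
  by_cases hmin : ∀ s ∈ I, wordLength S w ≤ wordLength S (s * w)
  · exact ⟨1, one_mem _, w, hw, one_mul w, by rw [wordLength_one, zero_add], hmin⟩
  push Not at hmin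
  obtain ⟨s, hs, hlt⟩ := hmin
  have hs_inv := Subgroup.subset_closure (hI s hs)
  obtain ⟨u, hu, v, hv, huv, hlen, hv_min⟩ :=
    ih _ hlt (mul_mem (Subgroup.subset_closure (hIS hs)) hw) rfl
  have hw_eq : s⁻¹ * u * v = w := by rw [mul_assoc, huv, inv_mul_cancel_left]
  refine ⟨s⁻¹ * u, mul_mem hs_inv hu, v, hv, hw_eq, ?_, hv_min⟩
  have hle_w := wordLength_mul_le hIS hI hS (mul_mem hs_inv hu) hv
  have hle_u := wordLength_mul_le subset_rfl hI hI hs_inv hu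
  have hle_s := wordLength_le_one (hI s hs)
  rw [hw_eq] at hle_w
  omega

theorem exists_mul_eq_of_pair_subset (hIS : {g, h} ⊆ S)
    (hI : ∀ s ∈ ({g, h} : Set G), s⁻¹ ∈ ({g, h} : Set G)) (hS : ∀ g ∈ S, g⁻¹ ∈ S)
    (hw : w ∈ Subgroup.closure S) (hle : wordLength S w ≤ wordLength S (g * w))
    (hlt : wordLength S (h * w) < wordLength S w) :
    ∃ u ∈ Subgroup.closure {g, h}, ∃ v ∈ Subgroup.closure S, u * v = w ∧
      wordLength S v < wordLength S w ∧ wordLength {g, h} u ≤ wordLength {g, h} (g * u) ∧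
      ∀ s ∈ ({g, h} : Set G), wordLength S v ≤ wordLength S (s * v) := by
  obtain ⟨u, hu, v, hv, rfl, hlen, hmin⟩ := exists_mul_eq_of_subset hIS hI hS hw
  refine ⟨u, hu, v, hv, rfl, ?_, ?_, hmin⟩
  · by_contra hge
    rw [eq_one_of_wordLength_eq_zero hI hu (by omega), one_mul] at hlt
    exact hlt.not_ge (hmin h (by simp))
  · have hgu := mul_mem (Subgroup.subset_closure (by simp : g ∈ ({g, h} : Set G))) hu
    have hle_mul := wordLength_mul_le hIS hI hS hgu hv
    rw [mul_assoc] at hle_mul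
    omega

theorem wordLength_mul_ne (hS : ∀ g ∈ S, g⁻¹ ∈ S)
    (heven : ∀ l : List G, (∀ g ∈ l, g ∈ S) → l.prod = 1 → Even l.length)
    (hg : g ∈ S) (hw : w ∈ Subgroup.closure S) :
    wordLength S (g * w) ≠ wordLength S w := by
  intro heq
  obtain ⟨l, hl, hlen, hprod⟩ := exists_list_length_eq_wordLength hS hw
  obtain ⟨l', hl', hlen', hprod'⟩ :=
    exists_list_length_eq_wordLength hS (mul_mem (Subgroup.subset_closure hg) hw)
  have hword : ∀ s ∈ g :: l ++ (l'.map (·⁻¹)).reverse, s ∈ S := by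
    simp only [List.mem_append, List.mem_cons, List.mem_reverse, List.mem_map]
    rintro s ((rfl | hs) | ⟨t, ht, rfl⟩)
    exacts [hg, hl s hs, hS t (hl' t ht)]
  have hrel : (g :: l ++ (l'.map (·⁻¹)).reverse).prod = 1 := by
    rw [List.prod_append, List.prod_cons, ← List.prod_inv_reverse, hprod, hprod', mul_inv_cancel]
  have hlength := heven _ hword hrel
  simp only [List.length_append, List.length_cons, List.length_reverse, List.length_map] at hlength
  grind

theorem exists_eq_mul_of_wordLength_pair_le (hg : g⁻¹ = g) (hh : h⁻¹ = h)
    (hu : u ∈ Subgroup.closure {g, h})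
    (hle : wordLength {g, h} u ≤ wordLength {g, h} (g * u)) (hne : wordLength {g, h} u ≠ 0) :
    ∃ v ∈ Subgroup.closure {g, h}, u = h * v ∧
      wordLength {g, h} u = wordLength {g, h} v + 1 ∧
      wordLength {g, h} v ≤ wordLength {g, h} (h * v) := by
  have hinv : ∀ s ∈ ({g, h} : Set G), s⁻¹ ∈ ({g, h} : Set G) := by simp [hg, hh]
  obtain ⟨s, rfl | rfl, v, hv, rfl, hlen⟩ := exists_eq_mul_of_wordLength_ne_zero hinv hu hne
  · rw [mul_mul_cancel_of_inv_eq_self hg] at hle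
    omega
  · exact ⟨v, hv, rfl, hlen, by omega⟩

end WordLength

section Chebyshev

open Polynomial.Chebyshev

variable {c : ℝ} {n : ℤ} {k : ℕ}

theorem eval_U_nonneg_of_one_le (hc : 1 ≤ c) (hn : -1 ≤ n) : 0 ≤ (U ℝ n).eval c := by
  have hn' : (0 : ℝ) ≤ n + 1 := by exact_mod_cast (by omega : 0 ≤ n + 1)
  obtain rfl | hc := hc.eq_or_lt
  · rwa [U_eval_one]
  have hpos : 0 < Real.arcosh c := Real.arcosh_pos hc
  have hU := U_real_cosh (Real.arcosh c) n
  rw [Real.cosh_arcosh hc.le] at hU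
  refine nonneg_of_mul_nonneg_left (hU ▸ ?_) (Real.sinh_pos_iff.2 hpos)
  exact Real.sinh_nonneg_iff.2 (by positivity)

theorem sin_pi_div_pos (hk : 2 ≤ k) : 0 < Real.sin (Real.pi / k) :=
  Real.sin_pos_of_pos_of_lt_pi (by positivity)
    (div_lt_self Real.pi_pos (by exact_mod_cast hk))

theorem eval_U_cos_pi_div_nonneg (hk : 2 ≤ k) (hn : -1 ≤ n) (hnk : n < k) :
    0 ≤ (U ℝ n).eval (Real.cos (Real.pi / k)) := by
  have hn' : (0 : ℝ) ≤ n + 1 := by exact_mod_cast (by omega : 0 ≤ n + 1)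
  have hnk' : (n + 1 : ℝ) ≤ k := by exact_mod_cast (by omega : n + 1 ≤ k)
  refine nonneg_of_mul_nonneg_left ?_ (sin_pi_div_pos hk)
  rw [U_real_cos]
  apply Real.sin_nonneg_of_nonneg_of_le_pi (by positivity)
  rw [← mul_div_assoc, div_le_iff₀ (by positivity), mul_comm]
  exact mul_le_mul_of_nonneg_left hnk' Real.pi_pos.le

theorem eval_U_sub_one_cos_pi_div (hk : 2 ≤ k) :
    (U ℝ (k - 1)).eval (Real.cos (Real.pi / k)) = 0 := by
  refine (mul_eq_zero_iff_right (sin_pi_div_pos hk).ne').1 ?_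
  rw [U_real_cos]
  push_cast
  rw [sub_add_cancel, mul_div_cancel₀ _ (by positivity), Real.sin_pi]

theorem eval_U_sub_two_cos_pi_div (hk : 2 ≤ k) :
    (U ℝ (k - 2)).eval (Real.cos (Real.pi / k)) = 1 := by
  refine mul_right_cancel₀ (sin_pi_div_pos hk).ne' ?_
  have hangle : ((k : ℝ) - 2 + 1) * (Real.pi / k) = Real.pi - Real.pi / k := by
    field_simp
    ring
  rw [U_real_cos]
  push_cast
  rw [hangle, Real.sin_pi_sub, one_mul]

end Chebyshev

section Reflection

variable {B : LinearMap.BilinForm ℝ V} {α : V} {g : V ≃ₗ[ℝ] V}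

theorem reflection_apply (B : LinearMap.BilinForm ℝ V) (α z : V) :
    reflection B α z = z - (2 * B α z) • α := by
  simp only [reflection, LinearMap.sub_apply, LinearMap.id_apply, LinearMap.smulRight_apply]
  module

theorem apply_of_eq_reflection (hg : (g : V →ₗ[ℝ] V) = reflection B α) (z : V) :
    g z = z - (2 * B α z) • α := by
  rw [← reflection_apply, ← hg, LinearEquiv.coe_coe]

theorem inv_eq_self_of_eq_reflection (hα : B α α = 1)
    (hg : (g : V →ₗ[ℝ] V) = reflection B α) : g⁻¹ = g := by
  refine inv_eq_of_mul_eq_one_left (LinearEquiv.ext fun z => ?_)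
  simp only [LinearEquiv.mul_apply, apply_of_eq_reflection hg, map_sub, map_smul, hα,
    smul_eq_mul, LinearEquiv.coe_one, id_eq]
  module

theorem det_reflection [FiniteDimensional ℝ V] (hα : B α α = 1) :
    LinearMap.det (reflection B α) = -1 := by
  have htrans : reflection B α = LinearMap.transvection (B α) ((-2 : ℝ) • α) := by
    ext z
    rw [reflection_apply, LinearMap.transvection.apply]
    module
  rw [htrans, LinearMap.transvection.det, map_smul, hα]
  norm_num

end Reflection

/-- The generating set of the reflection group of an arbitrary, possibly infinite, set of vectors:
the automorphisms `s_α` with `α ∈ Δ`. It extends `simpleReflections` from `Finset` to `Set`. -/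
def reflectionsIn (B : LinearMap.BilinForm ℝ V) (Δ : Set V) : Set (V ≃ₗ[ℝ] V) :=
  { g | ∃ α ∈ Δ, (g : V →ₗ[ℝ] V) = reflection B α }

section ReflectionGroup

variable {B : LinearMap.BilinForm ℝ V} {Δ : Set V} {α δ : V} {u w g h : V ≃ₗ[ℝ] V}

theorem inv_mem_reflectionsIn (hunit : ∀ α ∈ Δ, B α α = 1) :
    ∀ g ∈ reflectionsIn B Δ, g⁻¹ ∈ reflectionsIn B Δ := by
  rintro g ⟨α, hα, hg⟩
  rw [inv_eq_self_of_eq_reflection (hunit α hα) hg]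
  exact ⟨α, hα, hg⟩

theorem form_apply_apply_of_mem_closure (hsymm : ∀ x y, B x y = B y x)
    (hunit : ∀ α ∈ Δ, B α α = 1) (hw : w ∈ Subgroup.closure (reflectionsIn B Δ)) (y z : V) :
    B (w y) (w z) = B y z := by
  induction hw using Subgroup.closure_induction generalizing y z with
  | mem g hg =>
    obtain ⟨α, hα, hg⟩ := hg
    simp only [apply_of_eq_reflection hg, map_sub, map_smul, LinearMap.sub_apply,
      LinearMap.smul_apply, smul_eq_mul, hunit α hα, hsymm y α]
    ring
  | one => rfl
  | mul v w _ _ ihv ihw => rw [LinearEquiv.mul_apply, LinearEquiv.mul_apply, ihv, ihw]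
  | inv w _ ih => rw [← ih, ← LinearEquiv.mul_apply, ← LinearEquiv.mul_apply, mul_inv_cancel]; rfl

theorem form_apply_left_of_mem_closure (hsymm : ∀ x y, B x y = B y x)
    (hunit : ∀ α ∈ Δ, B α α = 1) (hw : w ∈ Subgroup.closure (reflectionsIn B Δ)) (y z : V) :
    B (w y) z = B y (w⁻¹ z) := by
  rw [← form_apply_apply_of_mem_closure hsymm hunit hw y (w⁻¹ z), ← LinearEquiv.mul_apply w,
    mul_inv_cancel, LinearEquiv.coe_one, id_eq]

theorem mul_eq_mul_of_inv_apply_eq (hu : ∀ y z, B (u y) z = B y (u⁻¹ z))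
    (hsymm : ∀ x y, B x y = B y x) (hg : (g : V →ₗ[ℝ] V) = reflection B α)
    (hh : (h : V →ₗ[ℝ] V) = reflection B δ) (hδ : u⁻¹ α = δ) : g * u = u * h := by
  have hα : u δ = α := by rw [← hδ, ← LinearEquiv.mul_apply, mul_inv_cancel]; rfl
  ext z
  rw [LinearEquiv.mul_apply, LinearEquiv.mul_apply, apply_of_eq_reflection hg,
    apply_of_eq_reflection hh, map_sub, map_smul, hα, hsymm α, hu, hδ, hsymm z]

theorem exists_restrict_prod_det_eq {U : Submodule ℝ V} [FiniteDimensional ℝ U]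
    (hunit : ∀ α ∈ Δ, B α α = 1) (hU : Δ ⊆ U) {l : List (V ≃ₗ[ℝ] V)}
    (hl : ∀ g ∈ l, g ∈ reflectionsIn B Δ) :
    ∃ f : U →ₗ[ℝ] U, (∀ z : U, (f z : V) = l.prod z) ∧ LinearMap.det f = (-1) ^ l.length := by
  induction l with
  | nil => exact ⟨LinearMap.id, fun z => rfl, by simp⟩
  | cons g l ih =>
    rw [List.forall_mem_cons] at hl
    obtain ⟨⟨α, hα, hg⟩, hl⟩ := hl
    obtain ⟨f, hf, hdet⟩ := ih hl
    have hα' : B.restrict U ⟨α, hU hα⟩ ⟨α, hU hα⟩ = 1 := hunit α hα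
    refine ⟨reflection (B.restrict U) ⟨α, hU hα⟩ * f, fun z => ?_, ?_⟩
    · rw [List.prod_cons, LinearEquiv.mul_apply, ← hf, apply_of_eq_reflection hg,
        Module.End.mul_apply, reflection_apply]
      rfl
    · rw [map_mul, det_reflection hα', hdet, List.length_cons, pow_succ']

/-- The roots occurring in a word span a finite-dimensional invariant subspace, so the determinant
is available even when `V` is infinite-dimensional. -/
theorem even_length_of_prod_eq_one (hunit : ∀ α ∈ Δ, B α α = 1) {l : List (V ≃ₗ[ℝ] V)}
    (hl : ∀ g ∈ l, g ∈ reflectionsIn B Δ) (hprod : l.prod = 1) : Even l.length := by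
  choose! root hroot using hl
  let R : Set V := root '' {g | g ∈ l}
  have hR : R ⊆ Δ := Set.image_subset_iff.2 fun g hg => (hroot g hg).1
  have : FiniteDimensional ℝ (Submodule.span ℝ R) :=
    FiniteDimensional.span_of_finite ℝ (l.finite_toSet.image root)
  obtain ⟨f, hf, hdet⟩ := exists_restrict_prod_det_eq
    (fun α hα => hunit α (hR hα)) Submodule.subset_span
    fun g hg => ⟨root g, Set.mem_image_of_mem root hg, (hroot g hg).2⟩
  have hf_id : f = LinearMap.id := LinearMap.ext fun z => Subtype.ext (by rw [hf, hprod]; rfl)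
  rw [hf_id, LinearMap.det_id] at hdet
  exact neg_one_pow_eq_one_iff_even (by norm_num) |>.1 hdet.symm

end ReflectionGroup

/-- Two unit vectors `α`, `β` with `B(α, β) = -c` together with their reflections `g = s_α`,
`h = s_β`: the data of a reflection group of rank two. -/
structure IsReflectionPair (B : LinearMap.BilinForm ℝ V) (c : ℝ) (α β : V)
    (g h : V ≃ₗ[ℝ] V) : Prop where
  symm : ∀ x y, B x y = B y x
  unit_left : B α α = 1
  unit_right : B β β = 1
  form_eq : B α β = -c
  eq_reflection_left : (g : V →ₗ[ℝ] V) = reflection B α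
  eq_reflection_right : (h : V →ₗ[ℝ] V) = reflection B β

namespace IsReflectionPair

open Polynomial.Chebyshev

variable {B : LinearMap.BilinForm ℝ V} {c : ℝ} {α β : V} {u g h : V ≃ₗ[ℝ] V}

theorem swap (P : IsReflectionPair B c α β g h) : IsReflectionPair B c β α h g :=
  ⟨P.symm, P.unit_right, P.unit_left, P.symm β α ▸ P.form_eq, P.eq_reflection_right,
    P.eq_reflection_left⟩

theorem inv_left (P : IsReflectionPair B c α β g h) : g⁻¹ = g :=
  inv_eq_self_of_eq_reflection P.unit_left P.eq_reflection_left

theorem inv_mem (P : IsReflectionPair B c α β g h) :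
    ∀ s ∈ ({g, h} : Set (V ≃ₗ[ℝ] V)), s⁻¹ ∈ ({g, h} : Set (V ≃ₗ[ℝ] V)) := by
  simp [P.inv_left, P.swap.inv_left]

theorem left_apply_left (P : IsReflectionPair B c α β g h) : g α = -α := by
  rw [apply_of_eq_reflection P.eq_reflection_left, P.unit_left]
  module

theorem left_apply_right (P : IsReflectionPair B c α β g h) : g β = β + (2 * c) • α := by
  rw [apply_of_eq_reflection P.eq_reflection_left, P.form_eq]
  module

theorem form_apply_left (P : IsReflectionPair B c α β g h) (hu : u ∈ Subgroup.closure {g, h})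
    (y z : V) : B (u y) z = B y (u⁻¹ z) := by
  refine form_apply_left_of_mem_closure (Δ := {α, β}) P.symm
    (by simp [P.unit_left, P.unit_right]) (Subgroup.closure_mono ?_ hu) y z
  rintro s (rfl | rfl)
  exacts [⟨α, by simp, P.eq_reflection_left⟩, ⟨β, by simp, P.eq_reflection_right⟩]

theorem exists_eq_mul (P : IsReflectionPair B c α β g h) (hu : u ∈ Subgroup.closure {g, h})
    (hle : wordLength {g, h} u ≤ wordLength {g, h} (g * u)) (hne : wordLength {g, h} u ≠ 0) :
    ∃ v ∈ Subgroup.closure {g, h}, u = h * v ∧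
      wordLength {g, h} u = wordLength {g, h} v + 1 ∧
      wordLength {g, h} v ≤ wordLength {g, h} (h * v) :=
  exists_eq_mul_of_wordLength_pair_le P.inv_left P.swap.inv_left hu hle hne

theorem exists_inv_apply_eq {n : ℕ} (P : IsReflectionPair B c α β g h)
    (hu : u ∈ Subgroup.closure {g, h})
    (hle : wordLength {g, h} u ≤ wordLength {g, h} (g * u)) (hn : wordLength {g, h} u = n) :
    ∃ γ δ, (γ = α ∧ δ = β ∨ γ = β ∧ δ = α) ∧
      u⁻¹ α = (U ℝ n).eval c • γ + (U ℝ (n - 1)).eval c • δ ∧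
      u⁻¹ β = -((U ℝ (n - 1)).eval c • γ + (U ℝ (n - 2)).eval c • δ) := by
  induction n generalizing α β g h u with
  | zero =>
    rw [eq_one_of_wordLength_eq_zero P.inv_mem hu hn]
    exact ⟨α, β, .inl ⟨rfl, rfl⟩, by simp, by simp⟩
  | succ n ih =>
    obtain ⟨v, hv, rfl, hlen, hle_v⟩ := P.exists_eq_mul hu hle (by omega)
    rw [Set.pair_comm g h] at hv hlen hle_v hn
    obtain ⟨γ, δ, hperm, hβ, hα⟩ := ih P.swap hv hle_v (by omega)
    refine ⟨γ, δ, hperm.symm, ?_, ?_⟩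
    · have hU_succ := congrArg (Polynomial.eval c) (U_add_one ℝ n)
      have hU := congrArg (Polynomial.eval c) (U_eq ℝ n)
      simp only [Polynomial.eval_sub, Polynomial.eval_mul, Polynomial.eval_ofNat,
        Polynomial.eval_X] at hU_succ hU
      rw [mul_inv_rev, P.swap.inv_left, LinearEquiv.mul_apply, P.swap.left_apply_right, map_add,
        map_smul, hα, hβ]
      push_cast
      rw [add_sub_cancel_right, hU_succ, hU]
      module
    · rw [mul_inv_rev, P.swap.inv_left, LinearEquiv.mul_apply, P.swap.left_apply_left, map_neg, hβ]
      push_cast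
      rw [add_sub_cancel_right, show (n : ℤ) + 1 - 2 = n - 1 by ring]

theorem exists_mul_eq_mul_of_wordLength_add_one_eq {k : ℕ} (hk : 2 ≤ k)
    (P : IsReflectionPair B (Real.cos (Real.pi / k)) α β g h) (hu : u ∈ Subgroup.closure {g, h})
    (hle : wordLength {g, h} u ≤ wordLength {g, h} (g * u))
    (hlen : wordLength {g, h} u + 1 = k) :
    ∃ s ∈ ({g, h} : Set (V ≃ₗ[ℝ] V)), g * u = u * s := by
  obtain ⟨γ, δ, hperm, hα, -⟩ := P.exists_inv_apply_eq hu hle rfl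
  rw [show (wordLength {g, h} u : ℤ) = k - 1 by omega, sub_sub,
    eval_U_sub_one_cos_pi_div hk, one_add_one_eq_two, eval_U_sub_two_cos_pi_div hk,
    zero_smul, one_smul, zero_add] at hα
  rcases hperm with ⟨-, rfl⟩ | ⟨-, rfl⟩
  · exact ⟨h, by simp, mul_eq_mul_of_inv_apply_eq (P.form_apply_left hu) P.symm
      P.eq_reflection_left P.eq_reflection_right hα⟩
  · exact ⟨g, by simp, mul_eq_mul_of_inv_apply_eq (P.form_apply_left hu) P.symm
      P.eq_reflection_left P.eq_reflection_left hα⟩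

theorem wordLength_lt {k : ℕ} (hk : 2 ≤ k)
    (P : IsReflectionPair B (Real.cos (Real.pi / k)) α β g h) (hu : u ∈ Subgroup.closure {g, h})
    (hle : wordLength {g, h} u ≤ wordLength {g, h} (g * u)) :
    wordLength {g, h} u < k := by
  induction hn : wordLength {g, h} u generalizing α β g h u with
  | zero => omega
  | succ n ih =>
    obtain ⟨v, hv, rfl, hlen, hle_v⟩ := P.exists_eq_mul hu hle (by omega)
    have hlt : n < k := by
      rw [Set.pair_comm g h] at hv hlen hle_v hn
      exact ih P.swap hv hle_v (by omega)
    by_contra hge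
    -- If `ℓ(h v) = k` then `h v = v s` and `v = g v'`, so `g h v = v' s` is too short.
    obtain ⟨s, hs, hvs⟩ : ∃ s ∈ ({g, h} : Set (V ≃ₗ[ℝ] V)), h * v = v * s := by
      rw [Set.pair_comm g h] at hv hlen hle_v hn ⊢
      exact P.swap.exists_mul_eq_mul_of_wordLength_add_one_eq hk hv hle_v (by omega)
    obtain ⟨v', hv', rfl, hlen'⟩ : ∃ v' ∈ Subgroup.closure {g, h}, v = g * v' ∧
        wordLength {g, h} v = wordLength {g, h} v' + 1 := by
      rw [Set.pair_comm g h] at hv hlen hle_v hn ⊢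
      obtain ⟨v', hv', hv_eq, hlen', -⟩ := P.swap.exists_eq_mul hv hle_v (by omega)
      exact ⟨v', hv', hv_eq, hlen'⟩
    have hshort : g * (h * (g * v')) = v' * s := by
      rw [hvs, mul_assoc, mul_mul_cancel_of_inv_eq_self P.inv_left]
    have hle_mul := wordLength_mul_le subset_rfl P.inv_mem P.inv_mem hv'
      (Subgroup.subset_closure hs)
    have hle_s := wordLength_le_one hs
    rw [hshort] at hle
    omega

theorem inv_apply_mem_hull_of_eval_U_nonneg (P : IsReflectionPair B c α β g h)
    (hu : u ∈ Subgroup.closure {g, h})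
    (hle : wordLength {g, h} u ≤ wordLength {g, h} (g * u))
    (hU : ∀ n : ℤ, -1 ≤ n → n ≤ wordLength {g, h} u → 0 ≤ (U ℝ n).eval c) :
    u⁻¹ α ∈ PointedCone.hull ℝ {α, β} := by
  obtain ⟨γ, δ, hperm, hα, -⟩ := P.exists_inv_apply_eq hu hle rfl
  have hγδ : γ ∈ PointedCone.hull ℝ {α, β} ∧ δ ∈ PointedCone.hull ℝ {α, β} := by
    constructor <;> apply PointedCone.subset_hull <;> grind
  rw [hα]
  exact add_mem (PointedCone.smul_mem _ (hU _ (by omega) le_rfl) hγδ.1)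
    (PointedCone.smul_mem _ (hU _ (by omega) (by omega)) hγδ.2)

theorem inv_apply_mem_hull (P : IsReflectionPair B c α β g h)
    (hc : 1 ≤ c ∨ ∃ k : ℕ, 2 ≤ k ∧ c = Real.cos (Real.pi / k))
    (hu : u ∈ Subgroup.closure {g, h})
    (hle : wordLength {g, h} u ≤ wordLength {g, h} (g * u)) :
    u⁻¹ α ∈ PointedCone.hull ℝ {α, β} := by
  refine P.inv_apply_mem_hull_of_eval_U_nonneg hu hle fun n hn hn_le => ?_
  obtain hc | ⟨k, hk, rfl⟩ := hc
  · exact eval_U_nonneg_of_one_le hc hn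
  · exact eval_U_cos_pi_div_nonneg hk hn
      (hn_le.trans_lt (by exact_mod_cast P.wordLength_lt hk hu hle))

end IsReflectionPair

/-- A set of vectors satisfying the metric axioms (1) and (2) of a root basis for a symmetric form.
It may be infinite, linearly or positively dependent, and need not span. -/
structure IsCoxeterSet (B : LinearMap.BilinForm ℝ V) (Δ : Set V) : Prop where
  symm : ∀ x y, B x y = B y x
  unit : ∀ α ∈ Δ, B α α = 1
  offdiag : ∀ α ∈ Δ, ∀ β ∈ Δ, α ≠ β →
    B α β ≤ -1 ∨ ∃ k : ℕ, 2 ≤ k ∧ B α β = -Real.cos (Real.pi / k)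

theorem IsRootBasis.isCoxeterSet {B : LinearMap.BilinForm ℝ V} {Δ : Finset V}
    (hΔ : IsRootBasis B Δ) (hsymm : ∀ x y, B x y = B y x) : IsCoxeterSet B (Δ : Set V) :=
  ⟨hsymm, hΔ.unit, hΔ.offdiag⟩

namespace IsCoxeterSet

variable {B : LinearMap.BilinForm ℝ V} {Δ : Set V} {α β x : V} {u w g h : V ≃ₗ[ℝ] V}

theorem isReflectionPair (hΔ : IsCoxeterSet B Δ) (hα : α ∈ Δ) (hβ : β ∈ Δ)
    (hg : (g : V →ₗ[ℝ] V) = reflection B α) (hh : (h : V →ₗ[ℝ] V) = reflection B β) :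
    IsReflectionPair B (-B α β) α β g h :=
  ⟨hΔ.symm, hΔ.unit α hα, hΔ.unit β hβ, (neg_neg _).symm, hg, hh⟩

theorem inv_apply_mem_hull_pair (hΔ : IsCoxeterSet B Δ) (hα : α ∈ Δ) (hβ : β ∈ Δ) (hne : α ≠ β)
    (hg : (g : V →ₗ[ℝ] V) = reflection B α) (hh : (h : V →ₗ[ℝ] V) = reflection B β)
    (hu : u ∈ Subgroup.closure {g, h})
    (hle : wordLength {g, h} u ≤ wordLength {g, h} (g * u)) :
    u⁻¹ α ∈ PointedCone.hull ℝ {α, β} := by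
  refine (hΔ.isReflectionPair hα hβ hg hh).inv_apply_mem_hull ?_ hu hle
  obtain hle | ⟨k, hk, heq⟩ := hΔ.offdiag α hα β hβ hne
  · exact .inl (by linarith)
  · exact .inr ⟨k, hk, by rw [heq, neg_neg]⟩

theorem inv_apply_mem_hull (hΔ : IsCoxeterSet B Δ)
    (hw : w ∈ Subgroup.closure (reflectionsIn B Δ)) (hα : α ∈ Δ)
    (hg : (g : V →ₗ[ℝ] V) = reflection B α)
    (hle : wordLength (reflectionsIn B Δ) w ≤ wordLength (reflectionsIn B Δ) (g * w)) :
    w⁻¹ α ∈ PointedCone.hull ℝ Δ := by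
  induction hn : wordLength (reflectionsIn B Δ) w using Nat.strong_induction_on
    generalizing w α g with
  | _ n ih =>
  subst hn
  have hS := inv_mem_reflectionsIn hΔ.unit
  by_cases hzero : wordLength (reflectionsIn B Δ) w = 0
  · rw [eq_one_of_wordLength_eq_zero hS hw hzero]
    exact PointedCone.subset_hull hα
  obtain ⟨h, ⟨β, hβ, hh⟩, hdesc⟩ := exists_wordLength_mul_lt hS hw hzero
  have hne : α ≠ β := by
    rintro rfl
    obtain rfl : g = h := LinearEquiv.toLinearMap_injective (hg.trans hh.symm)
    omega
  have hIS : {g, h} ⊆ reflectionsIn B Δ := by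
    rintro s (rfl | rfl)
    exacts [⟨α, hα, hg⟩, ⟨β, hβ, hh⟩]
  obtain ⟨u, hu, v, hv, rfl, hlt, hle_u, hmin⟩ := exists_mul_eq_of_pair_subset hIS
    (hΔ.isReflectionPair hα hβ hg hh).inv_mem hS hw hle hdesc
  have hv_hull : PointedCone.hull ℝ {α, β} ≤ (PointedCone.hull ℝ Δ).comap (v⁻¹ : V ≃ₗ[ℝ] V) := by
    refine Submodule.span_le.2 ?_
    rintro γ (rfl | rfl)
    exacts [ih _ hlt hv hα hg (hmin g (by simp)) rfl, ih _ hlt hv hβ hh (hmin h (by simp)) rfl]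
  rw [mul_inv_rev, LinearEquiv.mul_apply]
  exact hv_hull (hΔ.inv_apply_mem_hull_pair hα hβ hne hg hh hu hle_u)

theorem form_apply_nonneg (hΔ : IsCoxeterSet B Δ) (hx : ∀ α ∈ Δ, 0 ≤ B x α)
    (hw : w ∈ Subgroup.closure (reflectionsIn B Δ)) (hα : α ∈ Δ)
    (hg : (g : V →ₗ[ℝ] V) = reflection B α)
    (hle : wordLength (reflectionsIn B Δ) w ≤ wordLength (reflectionsIn B Δ) (g * w)) :
    0 ≤ B (w x) α := by
  rw [form_apply_left_of_mem_closure hΔ.symm hΔ.unit hw]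
  have hhull : PointedCone.hull ℝ Δ ≤ (PointedCone.positive ℝ ℝ).comap (B x) :=
    Submodule.span_le.2 hx
  exact hhull (hΔ.inv_apply_mem_hull hw hα hg hle)

end IsCoxeterSet

theorem chamber_length_general {B : LinearMap.BilinForm ℝ V} {Δ : Set V}
    (hΔ : IsCoxeterSet B Δ) {x : V} (hx : ∀ α ∈ Δ, 0 ≤ B x α) {w : V ≃ₗ[ℝ] V}
    (hw : w ∈ Subgroup.closure (reflectionsIn B Δ)) {α : V} (hα : α ∈ Δ) {g : V ≃ₗ[ℝ] V}
    (hg : (g : V →ₗ[ℝ] V) = reflection B α) :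
    (0 ≤ B (w x) α ∧
      wordLength (reflectionsIn B Δ) w < wordLength (reflectionsIn B Δ) (g * w)) ∨
    (B (w x) α ≤ 0 ∧
      wordLength (reflectionsIn B Δ) (g * w) < wordLength (reflectionsIn B Δ) w) := by
  have hgS : g ∈ reflectionsIn B Δ := ⟨α, hα, hg⟩
  have hne := wordLength_mul_ne (inv_mem_reflectionsIn hΔ.unit)
    (fun l => even_length_of_prod_eq_one hΔ.unit) hgS hw
  rcases hne.lt_or_gt with hlt | hlt
  · have P := hΔ.isReflectionPair hα hα hg hg
    have hnonneg := hΔ.form_apply_nonneg hx (mul_mem (Subgroup.subset_closure hgS) hw) hα hg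
      ((mul_mul_cancel_of_inv_eq_self P.inv_left).symm ▸ hlt.le)
    rw [LinearEquiv.mul_apply, P.form_apply_left (Subgroup.subset_closure (by simp)),
      P.inv_left, P.left_apply_left, map_neg] at hnonneg
    exact .inr ⟨by linarith, hlt⟩
  · exact .inl ⟨hΔ.form_apply_nonneg hx hw hα hg hlt.le, hlt⟩

/-- extending Maxwell, Corollary 1.8. For `x` in the
fundamental chamber, `w ∈ W` and a simple root `α ∈ Δ` with simple reflection
`s_α`, either `B(w(x), α) ≥ 0` and `ℓ(s_α w) > ℓ(w)`, or `B(w(x), α) ≤ 0` and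
`ℓ(s_α w) < ℓ(w)`. -/
theorem chamber_length
    {V : Type*} [AddCommGroup V] [Module ℝ V] [FiniteDimensional ℝ V]
    (B : LinearMap.BilinForm ℝ V) (hsymm : ∀ x y : V, B x y = B y x)
    (hnd : B.Nondegenerate)
    (Δ : Finset V) (hΔ : IsRootBasis B Δ) :
    ∀ x ∈ chamber B Δ, ∀ w ∈ weylGroup B Δ, ∀ α ∈ Δ,
      ∀ g : V ≃ₗ[ℝ] V, (g : V →ₗ[ℝ] V) = reflection B α →
      (0 ≤ B (w x) α ∧
        wordLength (simpleReflections B Δ) w <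
          wordLength (simpleReflections B Δ) (g * w)) ∨
      (B (w x) α ≤ 0 ∧
        wordLength (simpleReflections B Δ) (g * w) <
          wordLength (simpleReflections B Δ) w) := by
  intro x hx w hw α hα g hg
  exact chamber_length_general (hΔ.isCoxeterSet hsymm) hx hw hα hg

end BoydMaxwell
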